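/- arXiv:2401.00244 — 3 statements merged into one kernel-verified Lean document; each statement's English description precedes it below -/
import Mathlib

section
/- Let p ≥ 5 be a prime and let n ≥ 1 be an integer. Then (1/(72pn−6))·csc²(π/p) − 1 + c(1, 2; 1/p, 2/p) + c(2, 3; 2/p, 3/p) + c(12pn−7, 12pn−1; (12pn−7)/p, (12pn−1)/p) = −cot(2π/p)·cot(3π/p). -/
open Real
open scoped Classical

/-- `c(z) = cot(πz)` if `z ∉ ℤ`, and `0` if `z ∈ ℤ`. -/
noncomputable def cFn (z : ℝ) : ℝ :=
  if ∃ m : ℤ, z = m then 0 else Real.cot (Real.pi * z)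

/-- The Dedekind–Dieter cotangent sum
`c(b,a;x,y) = (1/a) ∑_{k=0}^{a-1} c((b/a)(k+y) - x) c((k+y)/a)`. -/
noncomputable def dedekindDieter (b a : ℤ) (x y : ℝ) : ℝ :=
  (1 / (a : ℝ)) * ∑ k ∈ Finset.range a.toNat,
    cFn ((b : ℝ) / (a : ℝ) * ((k : ℝ) + y) - x) * cFn (((k : ℝ) + y) / (a : ℝ))

lemma geom_inv (N : ℕ) (hN : 1 < N) (ζ w : ℂ) (hζ : IsPrimitiveRoot ζ N) (hw : w ^ N ≠ 1) :
    ∑ k ∈ Finset.range N, 1 / (1 - w * ζ ^ k) = N / (1 - w ^ N) := by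
  have h1 : ∀ k ∈ Finset.range N, 1 / (1 - w * ζ ^ k)
      = (∑ j ∈ Finset.range N, w ^ j * (ζ ^ j) ^ k) / (1 - w ^ N) := by
    intro k _
    have hz : (w * ζ ^ k) ^ N = w ^ N := by
      rw [mul_pow, ← pow_mul, mul_comm k N, pow_mul, hζ.pow_eq_one, one_pow, mul_one]
    have hne : 1 - w * ζ ^ k ≠ 0 := by
      intro h
      apply hw
      rw [← hz, ← sub_eq_zero.mp h, one_pow]
    have hne2 : 1 - w ^ N ≠ 0 := fun h => hw (sub_eq_zero.mp h).symm
    have hg := mul_neg_geom_sum (w * ζ ^ k) N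
    rw [hz] at hg
    rw [div_eq_div_iff hne hne2, one_mul, ← hg, mul_comm]
    congr 1
    apply Finset.sum_congr rfl
    intro j _
    rw [mul_pow, ← pow_mul, ← pow_mul, mul_comm k j]
  rw [Finset.sum_congr rfl h1, ← Finset.sum_div, Finset.sum_comm]
  congr 1
  rw [Finset.sum_eq_single_of_mem 0 (by simp; omega)]
  · simp
  · intro j hj hj0
    rw [← Finset.mul_sum]
    have hj1 : ζ ^ j ≠ 1 := hζ.pow_ne_one_of_pos_of_lt hj0 (Finset.mem_range.mp hj)
    have := mul_neg_geom_sum (ζ ^ j) N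
    rw [← pow_mul, mul_comm j N, pow_mul, hζ.pow_eq_one, one_pow, sub_self] at this
    rcases mul_eq_zero.mp this with h | h
    · exact absurd (sub_eq_zero.mp h).symm hj1
    · rw [h, mul_zero]

lemma cot_exp (z : ℂ) (h : Complex.exp (2 * Complex.I * z) ≠ 1) :
    Complex.cot z = Complex.I - 2 * Complex.I * (1 / (1 - Complex.exp (2 * Complex.I * z))) := by
  rw [Complex.cot_eq_exp_ratio]
  have h2 : 1 - Complex.exp (2 * Complex.I * z) ≠ 0 := fun h' => h (sub_eq_zero.mp h').symm
  have hI := Complex.I_ne_zero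
  field_simp
  rw [Complex.I_sq]
  ring

lemma cot_mult (N : ℕ) (hN : 1 < N) (a : ℝ) (ha : Real.sin (N * a) ≠ 0) :
    ∑ k ∈ Finset.range N, Real.cot (π * k / N + a) = N * Real.cot (N * a) := by
  have hN0 : (N : ℂ) ≠ 0 := by
    have : N ≠ 0 := by omega
    exact_mod_cast this
  have hw : Complex.exp (2 * Complex.I * a) ^ N ≠ 1 := by
    intro h
    rw [← Complex.exp_nat_mul, Complex.exp_eq_one_iff] at h
    obtain ⟨l, hl⟩ := h
    apply ha
    rw [Real.sin_eq_zero_iff]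
    refine ⟨l, ?_⟩
    have hI := Complex.I_ne_zero
    have : (l : ℂ) * π = N * a := by
      have h2 : (2 * Complex.I) * ((l : ℂ) * π) = (2 * Complex.I) * (N * a) := by
        linear_combination -hl
      exact mul_left_cancel₀ (by simp) h2
    exact_mod_cast this
  have hζ := Complex.isPrimitiveRoot_exp N (by omega)
  have hg := geom_inv N hN _ _ hζ hw
  have hk : ∀ k : ℕ, Complex.exp (2 * Complex.I * ((π * k / N + a : ℝ) : ℂ))
      = Complex.exp (2 * Complex.I * a) * Complex.exp (2 * π * Complex.I / N) ^ k := by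
    intro k
    rw [← Complex.exp_nat_mul, ← Complex.exp_add]
    congr 1
    push_cast
    ring
  have hkn : ∀ k : ℕ, Complex.exp (2 * Complex.I * ((π * k / N + a : ℝ) : ℂ)) ≠ 1 := by
    intro k h
    rw [hk] at h
    apply hw
    have h3 : (Complex.exp (2 * Complex.I * a)
        * Complex.exp (2 * π * Complex.I / N) ^ k) ^ N = 1 := by rw [h, one_pow]
    rw [mul_pow, ← pow_mul, mul_comm k N, pow_mul, hζ.pow_eq_one, one_pow, mul_one] at h3
    exact h3
  have hNa : Complex.exp (2 * Complex.I * ((N * a : ℝ) : ℂ))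
      = Complex.exp (2 * Complex.I * a) ^ N := by
    rw [← Complex.exp_nat_mul]
    congr 1
    push_cast
    ring
  have key : ((∑ k ∈ Finset.range N, Real.cot (π * k / N + a) : ℝ) : ℂ)
      = ((N * Real.cot (N * a) : ℝ) : ℂ) := by
    rw [Complex.ofReal_sum, Complex.ofReal_mul, Complex.ofReal_cot,
      cot_exp _ (by rw [hNa]; exact hw), hNa]
    rw [Finset.sum_congr rfl (fun k _ => by
      rw [Complex.ofReal_cot, cot_exp _ (hkn k), hk k])]
    rw [Finset.sum_sub_distrib, ← Finset.mul_sum, hg]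
    simp
    ring
  exact_mod_cast key

lemma cot_inv_tan (x : ℝ) : Real.cot x = (Real.tan x)⁻¹ := by
  rw [Real.cot_eq_cos_div_sin, Real.tan_eq_sin_div_cos, inv_div]

lemma cot_neg' (x : ℝ) : Real.cot (-x) = -Real.cot x := by
  rw [cot_inv_tan, cot_inv_tan, Real.tan_neg, inv_neg]

lemma cot_int_sub (x : ℝ) (n : ℤ) : Real.cot (n * π - x) = -Real.cot x := by
  rw [cot_inv_tan, cot_inv_tan, Real.tan_int_mul_pi_sub, inv_neg]

lemma cot_zero' : Real.cot 0 = 0 := by simp [Real.cot_eq_cos_div_sin]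

lemma cot_mult_zero (N : ℕ) (hN : 1 < N) :
    ∑ k ∈ Finset.range N, Real.cot (π * k / N) = 0 := by
  obtain ⟨M, rfl⟩ : ∃ M, N = M + 1 := ⟨N - 1, by omega⟩
  rw [Finset.sum_range_succ']
  simp only [Nat.cast_zero, mul_zero, zero_div, cot_zero', add_zero]
  have h := Finset.sum_range_reflect
    (fun k : ℕ => Real.cot (π * ((k + 1 : ℕ) : ℝ) / ((M + 1 : ℕ) : ℝ))) M
  have h2 : ∀ k ∈ Finset.range M,
      Real.cot (π * ((M - 1 - k + 1 : ℕ) : ℝ) / ((M + 1 : ℕ) : ℝ))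
      = - Real.cot (π * ((k + 1 : ℕ) : ℝ) / ((M + 1 : ℕ) : ℝ)) := by
    intro k hk
    have hk := Finset.mem_range.mp hk
    have e : M - 1 - k + 1 = M - k := by omega
    rw [e, ← cot_int_sub _ 1, Nat.cast_sub hk.le]
    congr 1
    have : (M : ℝ) + 1 ≠ 0 := by positivity
    push_cast
    field_simp
    ring
  rw [Finset.sum_congr rfl h2, Finset.sum_neg_distrib] at h
  linarith

lemma cFn_eq (z : ℝ) : cFn z = Real.cot (π * z) := by
  unfold cFn
  split_ifs with h
  · obtain ⟨m, rfl⟩ := h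
    rw [Real.cot_eq_cos_div_sin, mul_comm, Real.sin_int_mul_pi, div_zero]
  · rfl

lemma cot_prod (α β : ℝ) (h1 : Real.sin α ≠ 0) (h2 : Real.sin β ≠ 0)
    (h3 : Real.sin (β - α) ≠ 0) :
    Real.cot α * Real.cot β = -1 + Real.cot (β - α) * (Real.cot α - Real.cot β) := by
  simp only [Real.cot_eq_cos_div_sin]
  have e : Real.cos α / Real.sin α - Real.cos β / Real.sin β
      = Real.sin (β - α) / (Real.sin α * Real.sin β) := by
    rw [Real.sin_sub]
    field_simp
  rw [e, div_mul_div_comm, div_mul_div_comm, mul_comm (Real.cos (β - α)),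
    mul_div_mul_left _ _ h3, Real.cos_sub]
  field_simp
  ring

/-- cot of six times the angle, including the junk value at zero -/
lemma cot_six (u : ℝ) (h : u = 0 ∨ Real.sin (6 * u) ≠ 0) :
    Real.cot (6 * u) = (1 / 6) * ∑ m ∈ Finset.range 6, Real.cot (π * m / 6 + u) := by
  rcases h with rfl | h
  · have := cot_mult_zero 6 (by norm_num)
    simp only [add_zero, mul_zero, cot_zero']
    push_cast at this
    rw [this, mul_zero]
  · have := cot_mult 6 (by norm_num) u (by push_cast; exact h)
    push_cast at this
    rw [this]
    ring

lemma main_sum (p n : ℕ) (hp : p.Prime) (hp5 : 5 ≤ p) (hn : 1 ≤ n) (N : ℕ)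
    (hN : N + 1 = 12 * (p * n)) :
    ∑ k ∈ Finset.range N, Real.cot (6 * (π * k / N)) * Real.cot (π * k / N + π / p)
      = (1 / 6) * (1 / Real.sin (π / p) ^ 2 - 11 * N + N * Real.cot (π / p) ^ 2) := by
  have hpn : 5 ≤ p * n := by nlinarith
  have hN1 : 1 < N := by omega
  have hN0 : (N : ℝ) ≠ 0 := by
    have : N ≠ 0 := by omega
    exact_mod_cast this
  have hp0 : (p : ℝ) ≠ 0 := by
    have : p ≠ 0 := by omega
    exact_mod_cast this
  have hpi := Real.pi_ne_zero
  set x : ℝ := π / p with hx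
  have hNp : (N : ℝ) = 12 * (p * n) - 1 := by
    have : ((N + 1 : ℕ) : ℝ) = ((12 * (p * n) : ℕ) : ℝ) := by rw [hN]
    push_cast at this
    linarith
  have hNZ : (N : ℤ) = 12 * ((p : ℤ) * n) - 1 := by
    have : ((N + 1 : ℕ) : ℤ) = ((12 * (p * n) : ℕ) : ℤ) := by rw [hN]
    push_cast at this
    linarith
  have hp1 : ¬ (p : ℤ) ∣ 1 := by
    intro h
    have := Int.le_of_dvd (by norm_num) h
    omega
  have hp6 : ¬ (p : ℤ) ∣ 6 := by
    intro h
    have h' : p ∣ 6 := by exact_mod_cast h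
    have := Nat.le_of_dvd (by norm_num) h'
    interval_cases p
    · omega
    · exact absurd hp (by norm_num)
  -- nonvanishing facts
  have s1 : ∀ k : ℕ, Real.sin (π * k / N + x) ≠ 0 := by
    intro k h
    obtain ⟨l, hl⟩ := Real.sin_eq_zero_iff.mp h
    have h2 : π * ((l : ℝ) * N * p) = π * (k * p + N) := by
      rw [hx] at hl
      field_simp at hl
      linear_combination π * hl
    have h3 := mul_left_cancel₀ hpi h2
    have h4 : (l : ℤ) * N * p = k * p + N := by exact_mod_cast h3
    apply hp1
    refine ⟨k + 12 * n - l * N, ?_⟩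
    linear_combination h4 + hNZ
  have s2 : ∀ k m : ℕ, k < N → m < 6 → (k ≠ 0 ∨ m ≠ 0) →
      Real.sin (π * k / N + π * m / 6) ≠ 0 := by
    intro k m hk hm hkm h
    obtain ⟨l, hl⟩ := Real.sin_eq_zero_iff.mp h
    have h2 : π * (6 * ((l : ℝ) * N)) = π * (6 * k + m * N) := by
      field_simp at hl
      linear_combination π * hl
    have h3 := mul_left_cancel₀ hpi h2
    have h4 : 6 * ((l : ℤ) * N) = 6 * k + m * N := by exact_mod_cast h3
    have hm0 : m = 0 := by
      generalize (l : ℤ) * N = w at h4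
      generalize (p : ℤ) * n = q at hNZ
      interval_cases m <;> first | rfl | (exfalso; push_cast at h4; omega)
    subst hm0
    have h5 : (l : ℤ) * N = k := by push_cast at h4; linarith
    have h6 : (N : ℤ) ∣ k := ⟨l, by rw [← h5]; ring⟩
    have h7 : N ∣ k := by exact_mod_cast h6
    have := Nat.le_of_dvd (by omega) h7
    omega
  have s3 : ∀ m : ℕ, Real.sin (x - π * m / 6) ≠ 0 := by
    intro m h
    obtain ⟨l, hl⟩ := Real.sin_eq_zero_iff.mp h
    have h2 : π * (6 * p * (l : ℝ)) = π * (6 - m * p) := by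
      rw [hx] at hl
      field_simp at hl
      linear_combination π * hl
    have h3 := mul_left_cancel₀ hpi h2
    have h4 : 6 * p * (l : ℤ) = 6 - m * p := by exact_mod_cast h3
    apply hp6
    exact ⟨m + 6 * l, by linear_combination -h4⟩
  have sx : Real.sin x ≠ 0 := by simpa using s3 0
  have sm : ∀ m : ℕ, m < 6 → m ≠ 0 → Real.sin (π * m / 6) ≠ 0 := by
    intro m hm h0
    simpa using s2 0 m (by omega) hm (Or.inr h0)
  -- rewrite N-multiples
  have eNx : N * x = ((12 * n : ℤ) : ℝ) * π - x := by
    rw [hNp, hx]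
    push_cast
    field_simp
  have eNm : ∀ m : ℕ, N * (π * m / 6) = ((2 * p * n * m : ℤ) : ℝ) * π - π * m / 6 := by
    intro m
    rw [hNp]
    push_cast
    ring
  have sNx : Real.sin (N * x) ≠ 0 := by
    rw [eNx, Real.sin_int_mul_pi_sub]
    exact neg_ne_zero.mpr (mul_ne_zero (zpow_ne_zero _ (by norm_num)) sx)
  have sumx : ∑ k ∈ Finset.range N, Real.cot (π * k / N + x) = - N * Real.cot x := by
    rw [cot_mult N hN1 x sNx, eNx, cot_int_sub]
    ring
  have summ : ∀ m : ℕ, m < 6 →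
      ∑ k ∈ Finset.range N, Real.cot (π * k / N + π * m / 6) = - N * Real.cot (π * m / 6) := by
    intro m hm
    by_cases h0 : m = 0
    · subst h0
      simp only [Nat.cast_zero, mul_zero, zero_div, add_zero, cot_zero']
      exact cot_mult_zero N hN1
    · rw [cot_mult N hN1 _ ?_, eNm, cot_int_sub]
      · ring
      · rw [eNm, Real.sin_int_mul_pi_sub]
        exact neg_ne_zero.mpr (mul_ne_zero (zpow_ne_zero _ (by norm_num)) (sm m hm h0))
  -- inner sums
  have inner : ∀ m : ℕ, m < 6 →
      ∑ k ∈ Finset.range N, Real.cot (π * k / N + π * m / 6) * Real.cot (π * k / N + x)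
      = (if m = 0 then 1 / Real.sin x ^ 2 else 0)
        + (-N + Real.cot (x - π * m / 6) * (- N * Real.cot (π * m / 6) + N * Real.cot x)) := by
    intro m hm
    have e1 : ∀ k ∈ Finset.range N,
        Real.cot (π * k / N + π * m / 6) * Real.cot (π * k / N + x)
        = (if k = 0 then (if m = 0 then 1 / Real.sin x ^ 2 else 0) else 0)
          + (-1 + Real.cot (x - π * m / 6) *
            (Real.cot (π * k / N + π * m / 6) - Real.cot (π * k / N + x))) := by
      intro k hk
      have hk := Finset.mem_range.mp hk
      by_cases h : k ≠ 0 ∨ m ≠ 0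
      · have e : (if k = 0 then (if m = 0 then 1 / Real.sin x ^ 2 else 0) else (0 : ℝ)) = 0 := by
          rcases h with h | h <;> simp [h]
        have d : x - π * m / 6 = (π * k / N + x) - (π * k / N + π * m / 6) := by ring
        rw [e, zero_add, d]
        apply cot_prod _ _ (s2 k m hk hm h) (s1 k)
        rw [← d]
        exact s3 m
      · push Not at h
        obtain ⟨rfl, rfl⟩ := h
        simp only [Nat.cast_zero, mul_zero, zero_div, add_zero, cot_zero', zero_add, sub_zero,
          if_true, zero_mul]
        rw [Real.cot_eq_cos_div_sin]
        have := Real.sin_sq_add_cos_sq x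
        field_simp
        linear_combination this
    rw [Finset.sum_congr rfl e1, Finset.sum_add_distrib, Finset.sum_add_distrib,
      ← Finset.mul_sum, Finset.sum_sub_distrib, sumx, summ m hm]
    have : 0 < N := by omega
    simp [this]
  have inner2 : ∀ m ∈ Finset.range 6,
      ∑ k ∈ Finset.range N, Real.cot (π * k / N + π * m / 6) * Real.cot (π * k / N + x)
      = (if m = 0 then 1 / Real.sin x ^ 2 + N + N * Real.cot x ^ 2 else 0)
        - 2 * N - N * Real.cot x * Real.cot (π * m / 6) := by
    intro m hm
    have hm := Finset.mem_range.mp hm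
    rw [inner m hm]
    by_cases h0 : m = 0
    · subst h0
      simp [cot_zero']
      ring
    · have := cot_prod (π * m / 6) x (sm m hm h0) sx (s3 m)
      simp only [h0, if_false]
      linear_combination N * this
  have e6 : ∀ k ∈ Finset.range N,
      Real.cot (6 * (π * k / N)) * Real.cot (π * k / N + x)
      = (1 / 6) * ∑ m ∈ Finset.range 6,
        Real.cot (π * k / N + π * m / 6) * Real.cot (π * k / N + x) := by
    intro k hk
    have hk := Finset.mem_range.mp hk
    rw [cot_six, ← Finset.sum_mul, mul_assoc]
    · congr 2
      apply Finset.sum_congr rfl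
      intro m _
      rw [add_comm]
    · by_cases h0 : k = 0
      · left; simp [h0]
      · right
        intro h
        obtain ⟨l, hl⟩ := Real.sin_eq_zero_iff.mp h
        have h2 : π * ((l : ℝ) * N) = π * (6 * k) := by
          field_simp at hl
          linear_combination π * hl
        have h3 := mul_left_cancel₀ hpi h2
        have h4 : (l : ℤ) * N = 6 * k := by exact_mod_cast h3
        have h5 : N ∣ 6 * k := by
          have : (N : ℤ) ∣ 6 * k := ⟨l, by rw [← h4]; ring⟩
          exact_mod_cast this
        have hc : Nat.Coprime N 6 := by
          have h7 : IsCoprime (N : ℤ) (6 : ℤ) := ⟨-1, 2 * ((p : ℤ) * n), by rw [hNZ]; ring⟩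
          exact_mod_cast Nat.isCoprime_iff_coprime.mp (by exact_mod_cast h7)
        have := Nat.le_of_dvd (by omega) (hc.dvd_of_dvd_mul_left h5)
        omega
  rw [Finset.sum_congr rfl e6, ← Finset.mul_sum, Finset.sum_comm, Finset.sum_congr rfl inner2,
    Finset.sum_sub_distrib, Finset.sum_sub_distrib,
    ← Finset.mul_sum _ _ (N * Real.cot x)]
  have h6 := cot_mult_zero 6 (by norm_num)
  push_cast at h6
  rw [h6]
  simp
  ring

lemma trig_id (x : ℝ) (h0 : Real.sin x ≠ 0) (h2 : Real.cos x ≠ 0)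
    (h3 : Real.sin (3 * x) ≠ 0) :
    (5 - Real.cot x ^ 2) / 6 - 2 / 3 * (1 / (4 * Real.cos x ^ 2 - 1))
      = - (Real.cot (2 * x) * Real.cot (3 * x)) := by
  have h3' : Real.sin (3 * x) = Real.sin x * (4 * Real.cos x ^ 2 - 1) := by
    rw [Real.sin_three_mul]
    linear_combination (-4 * Real.sin x) * Real.sin_sq_add_cos_sq x
  have h4 : 4 * Real.cos x ^ 2 - 1 ≠ 0 := by
    intro h; rw [h3', h] at h3; simp at h3
  simp only [Real.cot_eq_cos_div_sin]
  rw [h3', Real.sin_two_mul, Real.cos_two_mul, Real.cos_three_mul]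
  have hs := Real.sin_sq x
  obtain ⟨d, hd⟩ : ∃ d, d = 4 * Real.cos x ^ 2 - 1 := ⟨_, rfl⟩
  rw [← hd] at h4 ⊢
  field_simp
  simp only [hs, hd]
  ring

lemma second_sum (x : ℝ) (h0 : Real.sin x ≠ 0) (h3 : Real.sin (3 * x) ≠ 0) :
    Real.cot (2 * π / 3) * Real.cot (π / 3 + x) + Real.cot (4 * π / 3) * Real.cot (2 * π / 3 + x)
      = - 2 * (1 / (4 * Real.cos x ^ 2 - 1)) := by
  have h3' : Real.sin (3 * x) = Real.sin x * (4 * Real.cos x ^ 2 - 1) := by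
    rw [Real.sin_three_mul]
    linear_combination (-4 * Real.sin x) * Real.sin_sq_add_cos_sq x
  have h4 : 4 * Real.cos x ^ 2 - 1 ≠ 0 := by
    intro h; rw [h3', h] at h3; simp at h3
  have a1 : 2 * π / 3 = ((1 : ℤ) : ℝ) * π - π / 3 := by push_cast; ring
  have a2 : 4 * π / 3 = - (((-1 : ℤ) : ℝ) * π - π / 3) := by push_cast; ring
  have a3 : 2 * π / 3 + x = ((1 : ℤ) : ℝ) * π - (π / 3 - x) := by push_cast; ring
  rw [a3, a2, a1, cot_neg', cot_int_sub, cot_int_sub, cot_int_sub]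
  simp only [Real.cot_eq_cos_div_sin]
  have hsq : √(3 : ℝ) ^ 2 = 3 := Real.sq_sqrt (by norm_num)
  have hs0 : √(3 : ℝ) ≠ 0 := by positivity
  have hs := Real.sin_sq x
  have hprod : Real.sin (π / 3 + x) * Real.sin (π / 3 - x) = (4 * Real.cos x ^ 2 - 1) / 4 := by
    rw [Real.sin_add, Real.sin_sub, Real.sin_pi_div_three, Real.cos_pi_div_three]
    linear_combination (Real.cos x ^ 2 / 4) * hsq - hs / 4
  have n1 : Real.sin (π / 3 + x) ≠ 0 := by
    intro h; rw [h, zero_mul] at hprod; apply h4; linarith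
  have n2 : Real.sin (π / 3 - x) ≠ 0 := by
    intro h; rw [h, mul_zero] at hprod; apply h4; linarith
  have hd : Real.cos (π / 3 + x) / Real.sin (π / 3 + x)
      + Real.cos (π / 3 - x) / Real.sin (π / 3 - x)
      = Real.sin (2 * π / 3) / ((4 * Real.cos x ^ 2 - 1) / 4) := by
    rw [← hprod, div_add_div _ _ n1 n2]
    congr 1
    have : 2 * π / 3 = (π / 3 + x) + (π / 3 - x) := by ring
    rw [this, Real.sin_add (π / 3 + x)]
    ring
  have h23 : Real.sin (2 * π / 3) = √3 / 2 := by
    rw [a1, Int.cast_one, one_mul, Real.sin_pi_sub, Real.sin_pi_div_three]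
  rw [h23] at hd
  rw [Real.sin_pi_div_three, Real.cos_pi_div_three]
  have hg : (1 / 2 / (√3 / 2) : ℝ) * (√3 / 2 / ((4 * Real.cos x ^ 2 - 1) / 4))
      = 2 * (1 / (4 * Real.cos x ^ 2 - 1)) := by
    field_simp
    norm_num
  linear_combination (-(1 / 2 / (√3 / 2) : ℝ)) * hd - hg

/-- The α-invariant identity `α(Q(p;2,3,12pn−1)) = α(L(p;−2,3))` for primes `p ≥ 5`
and `n ≥ 1`, expressed in terms of Dedekind–Dieter cotangent sums. -/
theorem stmt_5 (p n : ℕ) (hp : p.Prime) (hp5 : 5 ≤ p) (hn : 1 ≤ n) :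
    (1 / (72 * (p : ℝ) * n - 6)) * (1 / Real.sin (π / p) ^ 2) - 1
      + dedekindDieter 1 2 (1 / (p : ℝ)) (2 / (p : ℝ))
      + dedekindDieter 2 3 (2 / (p : ℝ)) (3 / (p : ℝ))
      + dedekindDieter (12 * (p : ℤ) * n - 7) (12 * (p : ℤ) * n - 1)
          ((12 * (p : ℝ) * n - 7) / (p : ℝ)) ((12 * (p : ℝ) * n - 1) / (p : ℝ)) =
      -(Real.cot (2 * π / p) * Real.cot (3 * π / p)) := by
  have hpn : 5 ≤ p * n := by nlinarith
  obtain ⟨N, hN⟩ : ∃ N, N + 1 = 12 * (p * n) := ⟨12 * (p * n) - 1, by omega⟩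
  have hp0 : (p : ℝ) ≠ 0 := by
    have : p ≠ 0 := by omega
    exact_mod_cast this
  have hN0 : (N : ℝ) ≠ 0 := by
    have : N ≠ 0 := by omega
    exact_mod_cast this
  have hpi := Real.pi_ne_zero
  have hNp : 12 * (p : ℝ) * n - 1 = N := by
    have : ((N + 1 : ℕ) : ℝ) = ((12 * (p * n) : ℕ) : ℝ) := by rw [hN]
    push_cast at this
    linarith
  have hNZ : 12 * (p : ℤ) * n - 1 = N := by
    have : ((N + 1 : ℕ) : ℤ) = ((12 * (p * n) : ℕ) : ℤ) := by rw [hN]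
    push_cast at this
    linarith
  have hb : 12 * (p : ℤ) * n - 7 = N - 6 := by linarith
  have hbR : 12 * (p : ℝ) * n - 7 = N - 6 := by linarith
  have h72 : 72 * (p : ℝ) * n - 6 = 6 * N := by linarith
  have hs : ∀ j : ℕ, 0 < j → j < p → Real.sin (j * (π / p)) ≠ 0 := by
    intro j hj hjp
    apply ne_of_gt
    have hp' : (0 : ℝ) < p := by positivity
    have hj' : (0 : ℝ) < j := by exact_mod_cast hj
    have hjp' : (j : ℝ) < p := by exact_mod_cast hjp
    apply Real.sin_pos_of_pos_of_lt_pi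
    · have := Real.pi_pos
      positivity
    · rw [← mul_div_assoc, div_lt_iff₀ hp', mul_comm]
      exact mul_lt_mul_of_pos_left hjp' Real.pi_pos
  have hs1 : Real.sin (π / p) ≠ 0 := by simpa using hs 1 (by omega) (by omega)
  have hs2 : Real.sin (2 * (π / p)) ≠ 0 := by simpa using hs 2 (by omega) (by omega)
  have hs3 : Real.sin (3 * (π / p)) ≠ 0 := by simpa using hs 3 (by omega) (by omega)
  have hc : Real.cos (π / p) ≠ 0 := by
    intro h; rw [Real.sin_two_mul, h] at hs2; simp at hs2
  rw [hNZ, hb, hNp, hbR, h72]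
  have D1 : dedekindDieter 1 2 (1 / (p : ℝ)) (2 / (p : ℝ)) = 0 := by
    have z : Real.cot (π * (1 / 2 * (1 + 2 / (p : ℝ)) - (p : ℝ)⁻¹)) = 0 := by
      have : π * (1 / 2 * (1 + 2 / (p : ℝ)) - (p : ℝ)⁻¹) = π / 2 := by field_simp; ring
      rw [this, Real.cot_eq_cos_div_sin, Real.cos_pi_div_two, zero_div]
    have z0 : Real.cot (π * (1 / 2 * (2 / (p : ℝ)) - (p : ℝ)⁻¹)) = 0 := by
      have : π * (1 / 2 * (2 / (p : ℝ)) - (p : ℝ)⁻¹) = 0 := by field_simp; ring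
      rw [this, cot_zero']
    simp only [one_div] at z z0
    simp [dedekindDieter, cFn_eq, Finset.sum_range_succ, z, z0]
  have D2 : dedekindDieter 2 3 (2 / (p : ℝ)) (3 / (p : ℝ))
      = - 2 / 3 * (1 / (4 * Real.cos (π / p) ^ 2 - 1)) := by
    have e := second_sum (π / p) hs1 hs3
    have z0 : π * (2 / 3 * (0 + 3 / (p : ℝ)) - 2 / p) = 0 := by field_simp; ring
    have z1 : π * (2 / 3 * (1 + 3 / (p : ℝ)) - 2 / p) = 2 * π / 3 := by field_simp; ring
    have z2 : π * (2 / 3 * (2 + 3 / (p : ℝ)) - 2 / p) = 4 * π / 3 := by field_simp; ring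
    have y1 : π * ((1 + 3 / (p : ℝ)) / 3) = π / 3 + π / p := by field_simp
    have y2 : π * ((2 + 3 / (p : ℝ)) / 3) = 2 * π / 3 + π / p := by field_simp
    have ht : (3 : ℤ).toNat = 3 := rfl
    unfold dedekindDieter
    rw [ht]
    simp only [Finset.sum_range_succ, Finset.sum_range_zero, cFn_eq]
    push_cast
    rw [z0, z1, z2, y1, y2, cot_zero']
    linear_combination e / 3
  have D3 : dedekindDieter ((N : ℤ) - 6) (N : ℤ) (((N : ℝ) - 6) / p) ((N : ℝ) / p)
      = - (1 / N) * ((1 / 6) * (1 / Real.sin (π / p) ^ 2 - 11 * N + N * Real.cot (π / p) ^ 2)) := by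
    rw [← main_sum p n hp hp5 hn N hN]
    unfold dedekindDieter
    rw [Int.toNat_natCast]
    push_cast
    rw [neg_mul, ← mul_neg, ← Finset.sum_neg_distrib]
    congr 1
    apply Finset.sum_congr rfl
    intro k _
    rw [cFn_eq, cFn_eq, ← neg_mul, ← cot_int_sub _ (k : ℤ)]
    congr 2
    · push_cast
      field_simp
      ring
    · field_simp
  have T := trig_id (π / p) hs1 hc hs3
  rw [D1, D2, D3, mul_div_assoc, mul_div_assoc, ← T]
  field_simp
  ring
end

section
/- Let p ≥ 5 be a prime. Then the Dedekind–Rademacher sum s(2p, 3; 1/3, −1/2) equals −1/18 if p ≡ 1 (mod 6), and equals 1/18 if p ≡ 5 (mod 6). Moreover, s(p, 2; 3/4, −1/2) = 0. -/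
open Real
open scoped Classical

/-- The generalized sawtooth function `((x))`. -/
noncomputable def saw (x : ℝ) : ℝ :=
  if ∃ m : ℤ, x = m then 0 else Int.fract x - 1 / 2

/-- The Dedekind–Rademacher sum
`s(b,a;x,y) = ∑_{k=0}^{|a|−1} ((x + (b/a)(k+y))) (((k+y)/a))`. -/
noncomputable def dedekindRademacher (b a : ℤ) (x y : ℝ) : ℝ :=
  ∑ k ∈ Finset.range a.natAbs,
    saw (x + (b : ℝ) / (a : ℝ) * ((k : ℝ) + y)) * saw (((k : ℝ) + y) / (a : ℝ))

theorem saw_of_int (x : ℝ) (m : ℤ) (h : x = m) : saw x = 0 := by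
  unfold saw
  exact if_pos ⟨m, h⟩

theorem saw_of_fract (x f : ℝ) (m : ℤ) (h : x = m + f) (h0 : 0 < f) (h1 : f < 1) :
    saw x = f - 1 / 2 := by
  have hf : Int.fract x = f := by
    rw [Int.fract_eq_iff]
    exact ⟨h0.le, h1, m, by rw [h]; ring⟩
  unfold saw
  rw [if_neg, hf]
  rintro ⟨n, hn⟩
  rw [hn, Int.fract_intCast] at hf
  linarith

/-- For a prime `p ≥ 5`: `s(2p, 3; 1/3, −1/2) = −1/18` if `p ≡ 1 (mod 6)`,
`s(2p, 3; 1/3, −1/2) = 1/18` if `p ≡ 5 (mod 6)`, and `s(p, 2; 3/4, −1/2) = 0`. -/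
theorem stmt_11 (p : ℕ) (hp : p.Prime) (hp5 : 5 ≤ p) :
    (p % 6 = 1 → dedekindRademacher (2 * (p : ℤ)) 3 (1 / 3) (-1 / 2) = -1 / 18) ∧
    (p % 6 = 5 → dedekindRademacher (2 * (p : ℤ)) 3 (1 / 3) (-1 / 2) = 1 / 18) ∧
    dedekindRademacher (p : ℤ) 2 (3 / 4) (-1 / 2) = 0 := by
  have hodd : p % 2 = 1 := by
    rcases hp.eq_two_or_odd with h | h <;> omega
  have a1 : saw ((0 + -1 / 2) / 3) = 1 / 3 := by
    rw [saw_of_fract _ (5 / 6) (-1)] <;> norm_num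
  have a2 : saw ((1 + -1 / 2) / 3) = -1 / 3 := by
    rw [saw_of_fract _ (1 / 6) 0] <;> norm_num
  have a3 : saw ((2 + -1 / 2) / 3) = 0 := by
    rw [saw_of_fract _ (1 / 2) 0] <;> norm_num
  have b1 : saw ((0 + -1 / 2) / 2) = 1 / 4 := by
    rw [saw_of_fract _ (3 / 4) (-1)] <;> norm_num
  have b2 : saw ((1 + -1 / 2) / 2) = -1 / 4 := by
    rw [saw_of_fract _ (1 / 4) 0] <;> norm_num
  have e3 : (3 : ℤ).natAbs = 3 := rfl
  have e2 : (2 : ℤ).natAbs = 2 := rfl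
  refine ⟨fun h => ?_, fun h => ?_, ?_⟩
  · obtain ⟨q, rfl⟩ : ∃ q, p = 6 * q + 1 := ⟨p / 6, by omega⟩
    unfold dedekindRademacher
    rw [e3]
    simp only [Finset.sum_range_succ, Finset.sum_range_zero]
    push_cast
    rw [a1, a2, a3, saw_of_int _ (-2 * q) (by push_cast; ring),
      saw_of_fract _ (2 / 3) (2 * q) (by push_cast; ring) (by norm_num) (by norm_num)]
    norm_num
  · obtain ⟨q, rfl⟩ : ∃ q, p = 6 * q + 5 := ⟨p / 6, by omega⟩
    unfold dedekindRademacher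
    rw [e3]
    simp only [Finset.sum_range_succ, Finset.sum_range_zero]
    push_cast
    rw [a1, a2, a3, saw_of_fract _ (2 / 3) (-2 * q - 2) (by push_cast; ring) (by norm_num)
      (by norm_num), saw_of_int _ (2 * q + 2) (by push_cast; ring)]
    norm_num
  · unfold dedekindRademacher
    rw [e2]
    simp only [Finset.sum_range_succ, Finset.sum_range_zero]
    push_cast
    rw [b1, b2]
    have : p % 4 = 1 ∨ p % 4 = 3 := by omega
    rcases this with h | h
    · obtain ⟨q, rfl⟩ : ∃ q, p = 4 * q + 1 := ⟨p / 4, by omega⟩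
      push_cast
      rw [saw_of_fract _ (1 / 2) (-q) (by push_cast; ring) (by norm_num) (by norm_num),
        saw_of_int _ (q + 1) (by push_cast; ring)]
      norm_num
    · obtain ⟨q, rfl⟩ : ∃ q, p = 4 * q + 3 := ⟨p / 4, by omega⟩
      push_cast
      rw [saw_of_int _ (-q) (by push_cast; ring),
        saw_of_fract _ (1 / 2) (q + 1) (by push_cast; ring) (by norm_num) (by norm_num)]
      norm_num
end

section
/- Let p ≥ 5 be a prime. Then the Dedekind–Rademacher sum s(10p² − p, 12p − 1; (24p−3)/(24p−2), −1/2) equals 43/118 if p = 5, and equals (p² + 12p − 181)/(12(12p − 1)) if p ≥ 7. -/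
open Real
open scoped Classical

lemma saw_add_int (x : ℝ) (n : ℤ) : saw (x + n) = saw x := by
  unfold saw
  have h : (∃ m : ℤ, x + n = m) ↔ ∃ m : ℤ, x = m := by
    constructor
    · rintro ⟨m, hm⟩
      exact ⟨m - n, by push_cast; linarith⟩
    · rintro ⟨m, hm⟩
      exact ⟨m + n, by push_cast; linarith⟩
  simp only [h, Int.fract_add_intCast]

/-- Reindexing a periodic sum by an affine bijection. -/
lemma sum_periodic_affine (a : ℕ) (ha : 0 < a) (F : ℤ → ℝ)
    (hF : ∀ k n : ℤ, F (k + a * n) = F k) (u v w c : ℤ) (huw : w * u = 1 + a * c) :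
    ∑ m ∈ Finset.range a, F (u * m + v) = ∑ k ∈ Finset.range a, F k := by
  have ha' : (0 : ℤ) < a := by exact_mod_cast ha
  have hmod : ∀ z : ℤ, (((z % a).toNat : ℕ) : ℤ) = z % a := fun z =>
    Int.toNat_of_nonneg (Int.emod_nonneg _ ha'.ne')
  have hmaps : ∀ m ∈ Finset.range a, ((u * (m : ℤ) + v) % a).toNat ∈ Finset.range a := by
    intro m _
    rw [Finset.mem_range]
    have := Int.emod_lt_of_pos (u * (m : ℤ) + v) ha'
    have := hmod (u * (m : ℤ) + v)
    omega
  have hinj : Set.InjOn (fun m : ℕ => ((u * (m : ℤ) + v) % a).toNat) (Finset.range a) := by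
    intro m hm n hn h
    simp only [Finset.coe_range, Set.mem_Iio] at hm hn
    have h1 : (u * (m : ℤ) + v) % a = (u * (n : ℤ) + v) % a := by
      have h' : ((u * (m : ℤ) + v) % a).toNat = ((u * (n : ℤ) + v) % a).toNat := h
      rw [← hmod (u * (m : ℤ) + v), ← hmod (u * (n : ℤ) + v), h']
    have h2 := Int.emod_emod_of_dvd (u * (m : ℤ) + v) (dvd_refl (a : ℤ))
    have h3 : (a : ℤ) ∣ (u * (n : ℤ) + v) - (u * (m : ℤ) + v) :=
      Int.ModEq.dvd h1
    have h4 : (a : ℤ) ∣ (n : ℤ) - m := by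
      have h5 : (n : ℤ) - m = w * ((u * (n : ℤ) + v) - (u * (m : ℤ) + v)) - a * (c * (n - m)) := by
        linear_combination (m - n : ℤ) * huw
      rw [h5]
      exact dvd_sub (Dvd.dvd.mul_left h3 _) (dvd_mul_right _ _)
    have h6 : (m : ℤ) % a = n % a := (Int.modEq_iff_dvd.2 h4)
    rw [Int.emod_eq_of_lt (by omega) (by omega), Int.emod_eq_of_lt (by omega) (by omega)] at h6
    exact_mod_cast h6
  refine Finset.sum_nbij (fun m : ℕ => ((u * (m : ℤ) + v) % a).toNat) hmaps hinj ?_ ?_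
  · exact Finset.surjOn_of_injOn_of_card_le _ hmaps hinj le_rfl
  · intro m _
    rw [hmod]
    have := hF ((u * (m : ℤ) + v) % a) ((u * (m : ℤ) + v) / a)
    rw [Int.emod_add_mul_ediv] at this
    exact this

/-- The floor term. -/
def fl (a m : ℕ) : ℕ := (144 * m + 72 + a) / (2 * a)

lemma saw_fl (a m : ℕ) (ha : 0 < a) (hodd : a % 2 = 1) :
    saw ((-144 * (m : ℝ) - 72 + a) / (2 * a)) = (fl a m : ℝ) - (72 * m + 36) / a := by
  have haR : (0 : ℝ) < a := by exact_mod_cast ha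
  have hdiv := Nat.div_add_mod (144 * m + 72 + a) (2 * a)
  have hlt := Nat.mod_lt (144 * m + 72 + a) (show 0 < 2 * a by omega)
  change 2 * a * fl a m + _ = _ at hdiv
  set r := (144 * m + 72 + a) % (2 * a) with hr
  have hrpos : 0 < r := by
    rcases Nat.eq_zero_or_pos r with h | h
    · exfalso
      rw [h, mul_assoc] at hdiv
      omega
    · exact h
  have hdR : 2 * (a : ℝ) * fl a m + r = 144 * m + 72 + a := by exact_mod_cast hdiv
  have hltR : (r : ℝ) < 2 * a := by exact_mod_cast hlt
  have hrR : (0 : ℝ) < r := by exact_mod_cast hrpos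
  have e : (-144 * (m : ℝ) - 72 + a) / (2 * a)
      = (1 - (r : ℝ) / (2 * a)) + ((-(fl a m : ℤ) : ℤ) : ℝ) := by
    push_cast
    field_simp
    linarith
  have b1 : (r : ℝ) / (2 * a) < 1 := by rw [div_lt_one (by positivity)]; exact hltR
  have b0 : 0 < (r : ℝ) / (2 * a) := by positivity
  rw [e, saw_add_int]
  unfold saw
  rw [if_neg, Int.fract_eq_self.2 ⟨by linarith, by linarith⟩]
  · field_simp
    linarith
  · rintro ⟨z, hz⟩
    have z0 : (0 : ℝ) < z := by linarith
    have z1 : (z : ℝ) < 1 := by linarith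
    have z0' : 0 < z := by exact_mod_cast z0
    have z1' : z < 1 := by exact_mod_cast z1
    omega

lemma saw_div (a m : ℕ) (hm : m < a) :
    saw ((m : ℝ) / a) = ((m : ℝ) / a - 1 / 2) + if m = 0 then 1 / 2 else 0 := by
  have haR : (0 : ℝ) < a := by exact_mod_cast (by omega : 0 < a)
  have hmR : (m : ℝ) < a := by exact_mod_cast hm
  unfold saw
  split_ifs with h1 h2 h2
  · subst h2; simp
  · exfalso
    obtain ⟨z, hz⟩ := h1
    have h0 : (0 : ℝ) < m := by exact_mod_cast Nat.pos_of_ne_zero h2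
    have b1 : (m : ℝ) / a < 1 := by rw [div_lt_one haR]; exact hmR
    have b0 : 0 < (m : ℝ) / a := by positivity
    rw [hz] at b0 b1
    have z0' : 0 < z := by exact_mod_cast b0
    have z1' : z < 1 := by exact_mod_cast b1
    omega
  · exact absurd ⟨0, by simp [h2]⟩ h1
  · rw [Int.fract_eq_self.2 ⟨by positivity, by rw [div_lt_one haR]; exact hmR⟩]; ring

lemma fl_eq_sum (a m : ℕ) (ha : 0 < a) (hm : m < a) :
    (fl a m : ℤ) = ∑ t ∈ Finset.range 72,
      if (a * (2 * t + 1) + 71) / 144 ≤ m then (1 : ℤ) else 0 := by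
  have hle : fl a m ≤ 72 := by
    unfold fl
    have : (144 * m + 72 + a) / (2 * a) < 73 := by
      rw [Nat.div_lt_iff_lt_mul (by omega)]; omega
    omega
  have h : ∀ t, (a * (2 * t + 1) + 71) / 144 ≤ m ↔ t < fl a m := by
    intro t
    unfold fl
    rw [← Nat.succ_le_iff, Nat.le_div_iff_mul_le (by omega), ← Nat.lt_succ_iff,
      Nat.div_lt_iff_lt_mul (by omega)]
    have e1 : a * (2 * t + 1) = 2 * (a * t) + a := by ring
    have e2 : t.succ * (2 * a) = 2 * (a * t) + 2 * a := by rw [Nat.succ_eq_add_one]; ring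
    rw [e1, e2]
    omega
  simp only [h]
  rw [← Finset.sum_filter]
  have : Finset.filter (fun t => t < fl a m) (Finset.range 72) = Finset.range (fl a m) := by
    ext t
    simp only [Finset.mem_filter, Finset.mem_range]
    omega
  rw [this]
  simp

lemma sum_lin (a n : ℕ) :
    ∑ m ∈ Finset.range n, (2 * (m : ℤ) - a) = n * (n - 1) - a * n := by
  induction n with
  | zero => simp
  | succ k ih => rw [Finset.sum_range_succ, ih]; push_cast; ring

lemma sum_tail (a T : ℕ) (hT : T ≤ a) :
    ∑ m ∈ Finset.range a, (2 * (m : ℤ) - a) * (if T ≤ m then (1 : ℤ) else 0)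
      = T * (a + 1 - T) - a := by
  have h : ∀ m ∈ Finset.range a, (2 * (m : ℤ) - a) * (if T ≤ m then (1 : ℤ) else 0)
      = (2 * (m : ℤ) - a) - if m < T then (2 * (m : ℤ) - a) else 0 := by
    intro m _
    by_cases hh : T ≤ m
    · simp [hh, not_lt.2 hh]
    · simp [hh, not_le.1 hh]
  rw [Finset.sum_congr rfl h, Finset.sum_sub_distrib, sum_lin, ← Finset.sum_filter]
  have : Finset.filter (fun m => m < T) (Finset.range a) = Finset.range T := by
    ext t
    simp only [Finset.mem_filter, Finset.mem_range]
    omega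
  rw [this, sum_lin]
  ring

lemma sum_fl (a : ℕ) (ha : 0 < a) :
    ∑ m ∈ Finset.range a, (2 * (m : ℤ) - a) * fl a m =
      ∑ t ∈ Finset.range 72, ((((a * (2 * t + 1) + 71) / 144 : ℕ) : ℤ) *
        (a + 1 - ((a * (2 * t + 1) + 71) / 144 : ℕ)) - a) := by
  have h : ∀ m ∈ Finset.range a, (2 * (m : ℤ) - a) * fl a m = ∑ t ∈ Finset.range 72,
      (2 * (m : ℤ) - a) * if (a * (2 * t + 1) + 71) / 144 ≤ m then (1 : ℤ) else 0 := by
    intro m hm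
    rw [fl_eq_sum a m ha (Finset.mem_range.1 hm), Finset.mul_sum]
  rw [Finset.sum_congr rfl h, Finset.sum_comm]
  refine Finset.sum_congr rfl fun t ht => sum_tail a _ ?_
  rw [Finset.mem_range] at ht
  rw [← Nat.lt_succ_iff, Nat.div_lt_iff_lt_mul (by omega)]
  have : a * (2 * t + 1) ≤ a * 143 := Nat.mul_le_mul_left _ (by omega)
  omega

lemma thr (q s t : ℕ) :
    ((144 * q + s) * (2 * t + 1) + 71) / 144 = q * (2 * t + 1) + (s * (2 * t + 1) + 71) / 144 := by
  rw [show (144 * q + s) * (2 * t + 1) + 71 = (s * (2 * t + 1) + 71) + 144 * (q * (2 * t + 1)) by ring,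
    Nat.add_mul_div_left _ _ (by norm_num)]
  ring

lemma sum_fl_eval (p q r : ℕ) (hr : r = 1 ∨ r = 5 ∨ r = 7 ∨ r = 11) (hp : p = 12 * q + r) :
    6 * ∑ m ∈ Finset.range (12 * p - 1), (2 * (m : ℤ) - (12 * p - 1 : ℕ)) * fl (12 * p - 1) m
      = (p : ℤ) ^ 2 + 12 * p - 37 + 72 * (12 * p - 1) ^ 2 - 216 * (12 * p - 1) := by
  have ha : 12 * p - 1 = 144 * q + (12 * r - 1) := by omega
  rw [sum_fl _ (by omega), ha]
  simp only [thr]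
  rcases hr with rfl | rfl | rfl | rfl <;>
  · simp only [Finset.sum_range_succ, Finset.sum_range_zero]
    norm_num
    subst hp
    push_cast
    ring

lemma sum_quad (a : ℝ) (n : ℕ) :
    ∑ m ∈ Finset.range n, (2 * (m : ℝ) - a) * (2 * m + 1)
      = 2 * ((n : ℝ) - 1) * n * (2 * n - 1) / 3 + (1 - a) * n * (n - 1) - a * n := by
  induction n with
  | zero => simp
  | succ k ih => rw [Finset.sum_range_succ, ih]; push_cast; ring

lemma main_sum_s13 (p : ℕ) (hp : p.Prime) (hp5 : 5 ≤ p) :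
    dedekindRademacher (10 * (p : ℤ) ^ 2 - p) (12 * (p : ℤ) - 1)
        ((24 * (p : ℝ) - 3) / (24 * (p : ℝ) - 2)) (-1 / 2) =
      ((p : ℝ) ^ 2 + 12 * (p : ℝ) - 181) / (12 * (12 * (p : ℝ) - 1))
        + (fl (12 * p - 1) 0 : ℝ) / 2 := by
  have h2 : p % 2 = 1 := by
    rcases hp.eq_two_or_odd with h | h <;> omega
  have h3 : p % 3 ≠ 0 := by
    intro h
    have := (Nat.prime_dvd_prime_iff_eq Nat.prime_three hp).1 (Nat.dvd_of_mod_eq_zero h)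
    omega
  obtain ⟨d, hd⟩ : ∃ d, p = 2 * d + 1 := ⟨p / 2, by omega⟩
  have hev := sum_fl_eval p (p / 12) (p % 12) (by omega) (by omega)
  obtain ⟨a, ha⟩ : ∃ a, a = 12 * p - 1 := ⟨_, rfl⟩
  have haZ : (a : ℤ) = 12 * p - 1 := by omega
  have haR : (a : ℝ) = 12 * p - 1 := by exact_mod_cast haZ
  have hdR : (p : ℝ) = 2 * d + 1 := by exact_mod_cast hd
  have hapos : 0 < a := by omega
  have ha0 : (0 : ℝ) < a := by exact_mod_cast hapos
  rw [← ha] at hev ⊢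
  set b : ℤ := 10 * (p : ℤ) ^ 2 - p with hb
  set F : ℤ → ℝ := fun k => saw (1 - 1 / (2 * a) + (b : ℝ) / a * (k + (-1 / 2))) *
    saw (((k : ℝ) + (-1 / 2)) / a) with hF
  have hx : (24 * (p : ℝ) - 3) / (24 * (p : ℝ) - 2) = 1 - 1 / (2 * a) := by
    have : 24 * (p : ℝ) - 2 = 2 * a := by rw [haR]; ring
    rw [this]
    field_simp
    rw [haR]; ring
  have hstart : dedekindRademacher b (12 * (p : ℤ) - 1)
        ((24 * (p : ℝ) - 3) / (24 * (p : ℝ) - 2)) (-1 / 2) = ∑ k ∈ Finset.range a, F k := by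
    unfold dedekindRademacher
    rw [hx, ← haZ]
    simp [hF]
  rw [hstart]
  have hper : ∀ k n : ℤ, F (k + a * n) = F k := by
    intro k n
    simp only [hF]
    congr 1
    · rw [← saw_add_int _ (-(b * n))]
      congr 1
      push_cast
      field_simp
      ring
    · rw [← saw_add_int _ (-n)]
      congr 1
      push_cast
      field_simp
      ring
  -- `72 b = -1 + a c`
  have hbc : b * (-72) = 1 + a * (-(60 * (p : ℤ) - 1)) := by
    rw [hb, haZ]; ring
  rw [← sum_periodic_affine a hapos F hper (-72) (6 * (p : ℤ) - 36) b _ hbc]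
  have hterm : ∀ m ∈ Finset.range a, F (-72 * m + (6 * (p : ℤ) - 36)) =
      (((m : ℝ) / a - 1 / 2) + if m = 0 then 1 / 2 else 0) *
        ((fl a m : ℝ) - (72 * m + 36) / a) := by
    intro m hm
    rw [← saw_div a m (Finset.mem_range.1 hm), ← saw_fl a m hapos (by omega)]
    simp only [hF]
    congr 1
    · rw [← saw_add_int ((m : ℝ) / a)
        (1 + (10 * (p : ℤ) ^ 2 - p - (60 * p - 1) * (2 * m + 1)) / 2)]
      have hdiv : (10 * (p : ℤ) ^ 2 - p - (60 * p - 1) * (2 * m + 1)) / 2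
          = 5 * p ^ 2 - d - (60 * p - 1) * m - 60 * d - 30 + 0 := by
        apply Int.ediv_eq_of_eq_mul_right (by norm_num)
        have : (p : ℤ) = 2 * d + 1 := by exact_mod_cast hd
        rw [this]; ring
      rw [hdiv]
      congr 1
      push_cast [hb]
      field_simp
      rw [haR, hdR]
      ring
    · congr 1
      push_cast
      field_simp
      rw [haR]
      ring
  rw [Finset.sum_congr rfl hterm]
  have hsplit : ∀ m ∈ Finset.range a,
      (((m : ℝ) / a - 1 / 2) + if m = 0 then 1 / 2 else 0) *
        ((fl a m : ℝ) - (72 * m + 36) / a) =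
      1 / (2 * a) * ((2 * (m : ℝ) - a) * fl a m)
        - 18 / (a : ℝ) ^ 2 * ((2 * (m : ℝ) - a) * (2 * m + 1))
        + if m = 0 then ((fl a 0 : ℝ) - 36 / a) / 2 else 0 := by
    intro m _
    by_cases h : m = 0
    · subst h
      simp
      field_simp
      ring
    · simp only [h, if_false]
      field_simp
      ring
  rw [Finset.sum_congr rfl hsplit, Finset.sum_add_distrib, Finset.sum_sub_distrib,
    ← Finset.mul_sum, ← Finset.mul_sum, sum_quad, Finset.sum_ite_eq' ,
    if_pos (Finset.mem_range.2 hapos)]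
  have hevR : 6 * ∑ m ∈ Finset.range a, (2 * (m : ℝ) - a) * (fl a m : ℝ)
      = (p : ℝ) ^ 2 + 12 * p - 37 + 72 * (12 * p - 1) ^ 2 - 216 * (12 * p - 1) := by
    exact_mod_cast hev
  have hS : ∑ m ∈ Finset.range a, (2 * (m : ℝ) - a) * (fl a m : ℝ)
      = ((p : ℝ) ^ 2 + 12 * p - 37 + 72 * a ^ 2 - 216 * a) / 6 := by
    rw [haR]; rw [haR] at hevR; linarith
  rw [hS, ← haR]
  field_simp
  ring

/-- For a prime `p ≥ 5`: `s(10p² − p, 12p − 1; (24p−3)/(24p−2), −1/2)` equals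
`43/118` if `p = 5`, and equals `(p² + 12p − 181)/(12(12p − 1))` if `p ≥ 7`. -/
theorem stmt_13 (p : ℕ) (hp : p.Prime) (hp5 : 5 ≤ p) :
    (p = 5 →
      dedekindRademacher (10 * (p : ℤ) ^ 2 - p) (12 * (p : ℤ) - 1)
        ((24 * (p : ℝ) - 3) / (24 * (p : ℝ) - 2)) (-1 / 2) = 43 / 118) ∧
    (7 ≤ p →
      dedekindRademacher (10 * (p : ℤ) ^ 2 - p) (12 * (p : ℤ) - 1)
        ((24 * (p : ℝ) - 3) / (24 * (p : ℝ) - 2)) (-1 / 2) =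
      ((p : ℝ) ^ 2 + 12 * (p : ℝ) - 181) / (12 * (12 * (p : ℝ) - 1))) := by
  constructor
  · intro h
    rw [main_sum_s13 p hp hp5]
    subst h
    norm_num [fl]
  · intro h
    rw [main_sum_s13 p hp hp5]
    have : fl (12 * p - 1) 0 = 0 := by
      unfold fl
      apply Nat.div_eq_of_lt
      omega
    rw [this]
    simp
end
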